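/- arXiv:2511.10777 — 2 statements merged into one kernel-verified Lean document; each statement's English description precedes it below -/
import Mathlib

section
/- Let n, m, d, k be positive integers and 0 < ε ≤ 1, with ⌈εk'⌉ ≤ k' and k' + ⌈εk'⌉ ≤ n for all 1 ≤ k' ≤ k. Every (n,m,d,k,ε,1)-strongly list union-free binary matrix M ∈ {0,1}^{m×n} is (k,ε)-strongly-distinguishable. -/
open scoped Classical

/-- The support of column `j` of a binary matrix `M`. -/
def colSupp {m n : ℕ} (M : Fin m → Fin n → Bool) (j : Fin n) : Finset (Fin m) :=
  Finset.univ.filter fun i => M i j = true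

/-- The support of row `i` of a binary matrix `M`. -/
def rowSupp {m n : ℕ} (M : Fin m → Fin n → Bool) (i : Fin m) : Finset (Fin n) :=
  Finset.univ.filter fun j => M i j = true

/-- The support of a binary vector. -/
def bsupp {n : ℕ} (x : Fin n → Bool) : Finset (Fin n) :=
  Finset.univ.filter fun j => x j = true

/-- `M` is an `(n,m,d,k,l,α)`-list union-free matrix. -/
def ListUF (n m d k l : ℕ) (α : ℝ) (M : Fin m → Fin n → Bool) : Prop :=
  (∀ j, (colSupp M j).card = d) ∧
  ∀ S T : Finset (Fin n), Disjoint S T → S.card = l → T.card = k →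
    ∃ j ∈ S,
      (((colSupp M j) ∩ (((S ∪ T).erase j).biUnion (colSupp M))).card : ℝ) < α * d

/-- `M` is `(n,m,d,k,ε,α)`-strongly list union-free: it is
`(n,m,d,k',⌈εk'⌉,α)`-list union-free for every `1 ≤ k' ≤ k`. -/
def StronglyListUF (n m d k : ℕ) (ε α : ℝ) (M : Fin m → Fin n → Bool) : Prop :=
  ∀ k', 1 ≤ k' → k' ≤ k → ListUF n m d k' ⌈ε * (k' : ℝ)⌉₊ α M

/-- `M` is `(k,l)`-distinguishable. -/
def Distinguishable {m n : ℕ} (k l : ℕ) (M : Fin m → Fin n → Bool) : Prop :=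
  ∀ x : Fin n → Bool, (bsupp x).card = k →
    k - l <
      ((bsupp x).filter fun i => ∃ j : Fin m, rowSupp M j ∩ bsupp x = {i}).card

/-- `M` is `(k,ε)`-strongly-distinguishable: it is `(k',⌈εk'⌉)`-distinguishable
for every `1 ≤ k' ≤ k`. -/
def StronglyDistinguishable {m n : ℕ} (k : ℕ) (ε : ℝ) (M : Fin m → Fin n → Bool) : Prop :=
  ∀ k', 1 ≤ k' → k' ≤ k → Distinguishable k' ⌈ε * (k' : ℝ)⌉₊ M

/-- If column `j` is not covered by the other columns indexed by `U`, then some row isolates `j`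
within any subset of `U` containing `j`. -/
theorem exists_rowSupp_inter_eq_singleton {m n : ℕ} (M : Fin m → Fin n → Bool)
    {U X : Finset (Fin n)} {j : Fin n} (hXU : X ⊆ U) (hj : j ∈ X)
    (h : (colSupp M j ∩ (U.erase j).biUnion (colSupp M)).card < (colSupp M j).card) :
    ∃ r : Fin m, rowSupp M r ∩ X = {j} := by
  obtain ⟨r, hrj, hr⟩ := Finset.exists_mem_notMem_of_card_lt_card h
  refine ⟨r, Finset.eq_singleton_iff_unique_mem.2 ⟨?_, fun i hi => ?_⟩⟩
  · simp_all [rowSupp, colSupp]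
  · by_contra hij
    obtain ⟨hri, hiX⟩ := Finset.mem_inter.1 hi
    refine hr (Finset.mem_inter.2 ⟨hrj, Finset.mem_biUnion.2
      ⟨i, Finset.mem_erase.2 ⟨hij, hXU hiX⟩, ?_⟩⟩)
    simpa [rowSupp, colSupp] using hri

/-- A list union-free matrix with threshold `1` is distinguishable. -/
theorem ListUF.distinguishable {n m d k l : ℕ} {M : Fin m → Fin n → Bool}
    (hM : ListUF n m d k l 1 M) (hlk : l ≤ k) (hn : k + l ≤ n) : Distinguishable k l M := by
  intro x hx
  by_contra! hcon
  have hsplit := Finset.card_filter_add_card_filter_not (s := bsupp x)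
    (fun i => ∃ j : Fin m, rowSupp M j ∩ bsupp x = {i})
  obtain ⟨S, hS, hSl⟩ := Finset.exists_subset_card_eq (n := l)
    (s := (bsupp x).filter fun i => ¬ ∃ j : Fin m, rowSupp M j ∩ bsupp x = {i}) (by omega)
  have hSx : S ⊆ bsupp x := hS.trans (Finset.filter_subset _ _)
  obtain ⟨T, hxT, hTS, hTk⟩ := Finset.exists_subsuperset_card_eq (n := k)
    (s := bsupp x \ S) (t := Sᶜ) (fun i hi => by simp_all)
    (by rw [Finset.card_sdiff_of_subset hSx]; omega)
    (by rw [Finset.card_compl, Fintype.card_fin]; omega)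
  obtain ⟨j, hjS, hj⟩ := hM.2 S T
    (Finset.disjoint_left.2 fun i hi hiT => Finset.mem_compl.1 (hTS hiT) hi) hSl hTk
  refine (Finset.mem_filter.1 (hS hjS)).2
    (exists_rowSupp_inter_eq_singleton M (U := S ∪ T) (fun i hi => ?_) (hSx hjS) ?_)
  · by_cases hiS : i ∈ S
    · exact Finset.mem_union_left _ hiS
    · exact Finset.mem_union_right _ (hxT (Finset.mem_sdiff.2 ⟨hi, hiS⟩))
  · rw [one_mul] at hj
    rw [hM.1 j]
    exact_mod_cast hj

/-- Every `(n,m,d,k,ε,1)`-strongly list union-free binary matrix is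
`(k,ε)`-strongly-distinguishable. -/
theorem stronglyListUF_is_stronglyDistinguishable (n m d k : ℕ)
    (hn : 0 < n) (hm : 0 < m) (hd : 0 < d) (hk : 0 < k)
    (ε : ℝ) (hε0 : 0 < ε) (hε1 : ε ≤ 1)
    (hceil : ∀ k', 1 ≤ k' → k' ≤ k → ⌈ε * (k' : ℝ)⌉₊ ≤ k')
    (hsum : ∀ k', 1 ≤ k' → k' ≤ k → k' + ⌈ε * (k' : ℝ)⌉₊ ≤ n)
    (M : Fin m → Fin n → Bool) (hM : StronglyListUF n m d k ε 1 M) :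
    StronglyDistinguishable k ε M := by
  exact fun k' h1 hk' => (hM k' h1 hk').distinguishable (hceil k' h1 hk') (hsum k' h1 hk')
end

section
/- Fix α > 1 and δ > 0, and set k_α := ⌈α·log(16k)/log log(16k)⌉. There exists k₀ such that for all k ≥ k₀ and all n ≥ k with m := 16·k_α·k·⌈log₂ n⌉, there exist a finitely supported probability distribution μ over matrices A ∈ ℝ^{m×n} and a decoding map f : ℝ^{m×n} × {0,1}^m → (finite subsets of [n]) such that for every fixed x ∈ ℝ^n with 1 ≤ |supp(x)| ≤ k, the probability over A ∼ μ that f(A, nz(Ax)) ≠ supp(x) is at most ⌈log₂ n⌉·(16k)^{1−α+δ} + e^{−k} + n^{−k} + 5k^{−3}. -/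
open scoped Classical

noncomputable section

/-- The entrywise "nonzero" map: `nz(y) ∈ {0,1}^m` records which entries of `y` are
nonzero. -/
def nzVec {m : ℕ} (y : Fin m → ℝ) : Fin m → Bool :=
  fun i => if y i = 0 then false else true

/-- The support of a real vector, as a finite set of coordinates. -/
def rsupp {n : ℕ} (x : Fin n → ℝ) : Finset (Fin n) :=
  Finset.univ.filter fun j => x j ≠ 0

/-- The real number encoded by a pair: pairs with first component `0` encode distinct positive
numbers, all other pairs encode `0`. -/
def entryValue {q N : ℕ} (e : Fin q × Fin N) : ℝ :=
  if e.1.val = 0 then (e.2.val : ℝ) + 1 else 0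

/-- The sensing matrix encoded by an array of pairs. -/
def sampleMatrix {m n q N : ℕ} (ω : Fin m → Fin n → Fin q × Fin N) :
    Matrix (Fin m) (Fin n) ℝ :=
  Matrix.of fun i j => entryValue (ω i j)

/-- The decoder returning the coordinates all of whose measurements are nonzero. -/
def coverDecoder {m n : ℕ} (B : Matrix (Fin m) (Fin n) ℝ) (y : Fin m → Bool) :
    Finset (Fin n) :=
  Finset.univ.filter fun j => ∀ i, B i j ≠ 0 → y i = true

lemma entryValue_ne_zero {q N : ℕ} {e : Fin q × Fin N} : entryValue e ≠ 0 ↔ e.1.val = 0 := by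
  unfold entryValue
  split_ifs with h
  · simp only [h, iff_true]
    positivity
  · simp [h]

lemma nzVec_eq_true {m : ℕ} {y : Fin m → ℝ} {i : Fin m} : nzVec y i = true ↔ y i ≠ 0 := by
  simp [nzVec]

lemma mem_rsupp {n : ℕ} {x : Fin n → ℝ} {j : Fin n} : j ∈ rsupp x ↔ x j ≠ 0 := by
  simp [rsupp]

lemma eq_of_entryValue_eq {q N : ℕ} {e e' : Fin q × Fin N} (h : entryValue e = entryValue e')
    (he : e.1.val = 0) (he' : e'.1.val = 0) : e = e' := by
  simp only [entryValue, he, he', if_true, add_left_inj, Nat.cast_inj] at h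
  exact Prod.ext (Fin.ext (he.trans he'.symm)) (Fin.ext h)

/-- The event that measurement `i` involves the support coordinate `j` but vanishes. -/
def cancelEvent {m n q N : ℕ} (x : Fin n → ℝ) (i : Fin m) (j : Fin n) :
    Finset (Fin m → Fin n → Fin q × Fin N) :=
  Finset.univ.filter fun ω => (ω i j).1.val = 0 ∧ (sampleMatrix ω).mulVec x i = 0

/-- A row in which `j` is selected while no coordinate of `S` is. -/
def Isolates {n q N : ℕ} (S : Finset (Fin n)) (j : Fin n) (r : Fin n → Fin q × Fin N) : Prop :=
  (r j).1.val = 0 ∧ ∀ l ∈ S, (r l).1.val ≠ 0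

/-- The event that no row isolates `j` from `S`. -/
def missEvent {m n q N : ℕ} (S : Finset (Fin n)) (j : Fin n) :
    Finset (Fin m → Fin n → Fin q × Fin N) :=
  Finset.univ.filter fun ω => ∀ i, ¬ Isolates S j (ω i)

lemma card_cancelEvent_mul_le {m n q N : ℕ} (hq : 0 < q) (x : Fin n → ℝ) (i : Fin m) (j : Fin n)
    (hj : x j ≠ 0) :
    (cancelEvent (q := q) (N := N) x i j).card * N
      ≤ Fintype.card (Fin m → Fin n → Fin q × Fin N) := by
  have key : ((cancelEvent (q := q) (N := N) x i j) ×ˢ (Finset.univ : Finset (Fin N))).card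
      ≤ (Finset.univ : Finset (Fin m → Fin n → Fin q × Fin N)).card := by
    refine Finset.card_le_card_of_injOn
      (fun p => Function.update p.1 i (Function.update (p.1 i) j (⟨0, hq⟩, p.2)))
      (fun _ _ => Finset.mem_coe.2 (Finset.mem_univ _)) ?_
    rintro ⟨ω, t⟩ hω ⟨ω', t'⟩ hω' h
    simp only [Finset.coe_product, Finset.coe_univ, Set.mem_prod, Finset.mem_coe, cancelEvent,
      Finset.mem_filter, Finset.mem_univ, true_and, Set.mem_univ, and_true] at hω hω'
    have hrow : ∀ l, l ≠ j → ω i l = ω' i l := fun l hl => by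
      simpa [hl] using congrFun (congrFun h i) l
    have ht : t = t' := by simpa using congrFun (congrFun h i) j
    have hne : ∀ i', i' ≠ i → ω i' = ω' i' := fun i' hi => by
      simpa [hi] using congrFun h i'
    have hval : entryValue (ω i j) = entryValue (ω' i j) := by
      have e := hω.2.trans hω'.2.symm
      simp only [Matrix.mulVec, dotProduct, sampleMatrix, Matrix.of_apply] at e
      rw [← Finset.add_sum_erase _ _ (Finset.mem_univ j),
        ← Finset.add_sum_erase (a := j) _ _ (Finset.mem_univ j),
        Finset.sum_congr rfl fun l hl => by rw [hrow l (Finset.ne_of_mem_erase hl)]] at e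
      exact mul_right_cancel₀ hj (add_right_cancel e)
    have hij := eq_of_entryValue_eq hval hω.1 hω'.1
    refine Prod.ext (funext fun i' => ?_) ht
    by_cases hi : i' = i
    · subst hi
      funext l
      by_cases hl : l = j
      · exact hl ▸ hij
      · exact hrow l hl
    · exact hne i' hi
  simpa [Finset.card_product] using key

lemma card_isolates {n q N : ℕ} (hq : 0 < q) (S : Finset (Fin n)) (j : Fin n) (hj : j ∉ S) :
    ((Finset.univ.filter (Isolates (q := q) (N := N) S j)).card : ℝ)
      = ((q * N : ℕ) : ℝ) ^ n * ((1 / q) * (1 - 1 / q) ^ S.card) := by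
  have hq' : (q : ℝ) ≠ 0 := by positivity
  have h0 : (Finset.univ.filter fun a : Fin q => a.val = 0) = {⟨0, hq⟩} := by
    ext a
    simp [Fin.ext_iff]
  have h1 : (Finset.univ.filter fun a : Fin q => a.val ≠ 0) = {⟨0, hq⟩}ᶜ := by
    ext a
    simp [Fin.ext_iff]
  have hset : Finset.univ.filter (Isolates (q := q) (N := N) S j)
      = Fintype.piFinset fun l =>
        (if l = j then Finset.univ.filter fun a : Fin q => a.val = 0
          else if l ∈ S then Finset.univ.filter fun a : Fin q => a.val ≠ 0
          else Finset.univ) ×ˢ (Finset.univ : Finset (Fin N)) := by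
    ext r
    simp only [Finset.mem_filter, Finset.mem_univ, true_and, Fintype.mem_piFinset,
      Finset.mem_product, and_true, Isolates]
    constructor
    · rintro ⟨ha, hb⟩ l
      split_ifs with h h'
      · subst h
        simpa using ha
      · simpa using hb l h'
      · exact Finset.mem_univ _
    · intro h
      refine ⟨by simpa using h j, fun l hl => ?_⟩
      have hlj : l ≠ j := fun e => hj (e ▸ hl)
      simpa [hlj, hl] using h l
  rw [hset, Fintype.card_piFinset, Nat.cast_prod]
  have hfac : ∀ l : Fin n, ((((if l = j then Finset.univ.filter fun a : Fin q => a.val = 0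
          else if l ∈ S then Finset.univ.filter fun a : Fin q => a.val ≠ 0
          else Finset.univ) ×ˢ (Finset.univ : Finset (Fin N))).card : ℕ) : ℝ)
        = ((q * N : ℕ) : ℝ) * ((if l = j then 1 / (q : ℝ) else 1)
          * (if l ∈ S then 1 - 1 / (q : ℝ) else 1)) := by
    intro l
    rw [h0, h1, Finset.card_product]
    split_ifs with h h' h'
    · exact absurd (h ▸ h') hj
    · simp
      field_simp
    · rw [Finset.card_compl, Finset.card_singleton]
      simp only [Fintype.card_fin, Finset.card_univ]
      push_cast [Nat.cast_sub (Nat.one_le_iff_ne_zero.2 hq.ne')]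
      field_simp
    · simp
  rw [Finset.prod_congr rfl fun l _ => hfac l, Finset.prod_mul_distrib, Finset.prod_mul_distrib]
  simp

lemma card_missEvent_le {m n k N : ℕ} (hk : 0 < k) (S : Finset (Fin n)) (hS : S.card ≤ k)
    (j : Fin n) (hj : j ∉ S) :
    ((missEvent (m := m) (q := 2 * k) (N := N) S j).card : ℝ)
      ≤ (1 - 1 / (4 * k)) ^ m
        * (Fintype.card (Fin m → Fin n → Fin (2 * k) × Fin N) : ℝ) := by
  have hk' : (1 : ℝ) ≤ k := by exact_mod_cast hk
  have hset : missEvent (m := m) (q := 2 * k) (N := N) S j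
      = Fintype.piFinset fun _ => Finset.univ.filter fun r => ¬ Isolates S j r := by
    ext ω
    simp [missEvent]
  have hsplit := Finset.card_filter_add_card_filter_not
    (s := (Finset.univ : Finset (Fin n → Fin (2 * k) × Fin N))) (Isolates S j)
  have hsplit' : ((Finset.univ.filter (Isolates (q := 2 * k) (N := N) S j)).card : ℝ)
      + ((Finset.univ.filter fun r => ¬ Isolates (q := 2 * k) (N := N) S j r).card : ℝ)
      = ((2 * k * N : ℕ) : ℝ) ^ n := by
    rw [← Nat.cast_add, hsplit]
    simp
  rw [card_isolates (by positivity) S j hj] at hsplit'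
  have hp : (1 : ℝ) / (4 * k) ≤ (1 / (2 * k : ℕ)) * (1 - 1 / (2 * k : ℕ)) ^ S.card := by
    have hle : (1 : ℝ) / (2 * k) ≤ 1 / 2 := by
      apply one_div_le_one_div_of_le <;> linarith
    have hb : (1 : ℝ) / 2 ≤ (1 - 1 / (2 * k)) ^ S.card := calc
      (1 : ℝ) / 2 = 1 + k * (-(1 / (2 * k))) := by field_simp; norm_num
      _ ≤ (1 + -(1 / (2 * k : ℝ))) ^ k := one_add_mul_le_pow (by linarith) k
      _ = (1 - 1 / (2 * k)) ^ k := by rw [← sub_eq_add_neg]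
      _ ≤ _ := pow_le_pow_of_le_one (by linarith) (by simp) hS
    push_cast
    calc (1 : ℝ) / (4 * k) = 1 / (2 * k) * (1 / 2) := by field_simp; norm_num
      _ ≤ _ := by gcongr
  have hrow : ((Finset.univ.filter fun r => ¬ Isolates (q := 2 * k) (N := N) S j r).card : ℝ)
      ≤ (1 - 1 / (4 * k)) * ((2 * k * N : ℕ) : ℝ) ^ n := by
    have : (0 : ℝ) ≤ ((2 * k * N : ℕ) : ℝ) ^ n := by positivity
    nlinarith [mul_le_mul_of_nonneg_left hp this]
  rw [hset, Fintype.card_piFinset, Finset.prod_const, Finset.card_univ, Fintype.card_fin,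
    Nat.cast_pow]
  calc _ ≤ ((1 - 1 / (4 * k)) * ((2 * k * N : ℕ) : ℝ) ^ n) ^ m := by gcongr
    _ = _ := by simp [mul_pow]

lemma coverDecoder_sampleMatrix {m n q N : ℕ} (x : Fin n → ℝ)
    (ω : Fin m → Fin n → Fin q × Fin N)
    (hcancel : ∀ i, ∀ j ∈ rsupp x, ω ∉ cancelEvent x i j)
    (hmiss : ∀ j ∉ rsupp x, ω ∉ missEvent (rsupp x) j) :
    coverDecoder (sampleMatrix ω) (nzVec ((sampleMatrix ω).mulVec x)) = rsupp x := by
  ext j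
  simp only [coverDecoder, Finset.mem_filter, Finset.mem_univ, true_and, nzVec_eq_true,
    sampleMatrix, Matrix.of_apply, entryValue_ne_zero]
  constructor
  · intro h
    by_contra hj
    have := hmiss j hj
    simp only [missEvent, Finset.mem_filter, Finset.mem_univ, true_and, not_forall, not_not] at this
    obtain ⟨i, hi, hS⟩ := this
    refine h i hi ?_
    simp only [Matrix.mulVec, dotProduct, Matrix.of_apply]
    refine Finset.sum_eq_zero fun l _ => ?_
    by_cases hl : l ∈ rsupp x
    · have : entryValue (ω i l) = 0 := by
        by_contra hne
        exact hS l hl (entryValue_ne_zero.1 hne)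
      simp [this]
    · rw [mem_rsupp, not_not] at hl
      simp [hl]
  · intro hj i hi h0
    exact hcancel i j hj (Finset.mem_filter.2 ⟨Finset.mem_univ _, hi, h0⟩)

lemma card_decoding_failure_le {m n k N : ℕ} (hk : 0 < k) (hN : 0 < N) (x : Fin n → ℝ)
    (hx : (rsupp x).card ≤ k) :
    ((Finset.univ.filter fun ω : Fin m → Fin n → Fin (2 * k) × Fin N =>
        coverDecoder (sampleMatrix ω) (nzVec ((sampleMatrix ω).mulVec x)) ≠ rsupp x).card : ℝ)
      ≤ ((m * n : ℝ) / N + n * (1 - 1 / (4 * k)) ^ m)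
        * (Fintype.card (Fin m → Fin n → Fin (2 * k) × Fin N) : ℝ) := by
  set C : ℝ := (Fintype.card (Fin m → Fin n → Fin (2 * k) × Fin N) : ℝ)
  have hk' : (1 : ℝ) ≤ k := by exact_mod_cast hk
  have hN' : (0 : ℝ) < N := by exact_mod_cast hN
  have hε : (0 : ℝ) ≤ 1 - 1 / (4 * k) := by
    rw [sub_nonneg, div_le_one (by positivity)]
    linarith
  have hsub : (Finset.univ.filter fun ω : Fin m → Fin n → Fin (2 * k) × Fin N =>
        coverDecoder (sampleMatrix ω) (nzVec ((sampleMatrix ω).mulVec x)) ≠ rsupp x)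
      ⊆ (Finset.univ ×ˢ rsupp x).biUnion (fun p => cancelEvent x p.1 p.2)
        ∪ (rsupp x)ᶜ.biUnion fun j => missEvent (rsupp x) j := by
    intro ω hω
    by_contra h
    simp only [Finset.mem_union, Finset.mem_biUnion, Finset.mem_product, Finset.mem_univ, true_and,
      Finset.mem_compl, Prod.exists, not_or, not_exists, not_and] at h
    exact (Finset.mem_filter.1 hω).2
      (coverDecoder_sampleMatrix x ω (fun i j hj => h.1 i j hj) fun j hj => h.2 j hj)
  have hcancel : (((Finset.univ ×ˢ rsupp x).biUnion (fun p : Fin m × Fin n =>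
      cancelEvent (q := 2 * k) (N := N) x p.1 p.2)).card : ℝ) ≤ (m * n : ℝ) / N * C := by
    calc _ ≤ ∑ p ∈ Finset.univ ×ˢ rsupp x,
          ((cancelEvent (m := m) (q := 2 * k) (N := N) x p.1 p.2).card : ℝ) := by
          exact_mod_cast Finset.card_biUnion_le
      _ ≤ ∑ p ∈ (Finset.univ : Finset (Fin m)) ×ˢ rsupp x, C / N := by
          refine Finset.sum_le_sum fun p hp => ?_
          rw [le_div_iff₀ hN']
          have := card_cancelEvent_mul_le (m := m) (q := 2 * k) (N := N) (by positivity)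
            x p.1 p.2 (mem_rsupp.1 (Finset.mem_product.1 hp).2)
          calc _ = (((cancelEvent (m := m) (q := 2 * k) (N := N) x p.1 p.2).card * N : ℕ) : ℝ) := by
                push_cast
                rfl
            _ ≤ C := Nat.cast_le.2 this
      _ = m * (rsupp x).card * (C / N) := by simp [Finset.card_product]
      _ ≤ m * n * (C / N) := by
          gcongr
          simpa using Finset.card_le_univ (rsupp x)
      _ = _ := by ring
  have hmiss : (((rsupp x)ᶜ.biUnion fun j =>
      missEvent (m := m) (q := 2 * k) (N := N) (rsupp x) j).card : ℝ)
      ≤ n * (1 - 1 / (4 * k)) ^ m * C := by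
    calc _ ≤ ∑ j ∈ (rsupp x)ᶜ,
          ((missEvent (m := m) (q := 2 * k) (N := N) (rsupp x) j).card : ℝ) := by
          exact_mod_cast Finset.card_biUnion_le
      _ ≤ ∑ j ∈ (rsupp x)ᶜ, (1 - 1 / (4 * k)) ^ m * C :=
          Finset.sum_le_sum fun j hj => card_missEvent_le hk _ hx j (Finset.mem_compl.1 hj)
      _ = ((rsupp x)ᶜ.card : ℝ) * ((1 - 1 / (4 * k)) ^ m * C) := by simp
      _ ≤ n * ((1 - 1 / (4 * k)) ^ m * C) := by
          gcongr
          simpa using Finset.card_le_univ (rsupp x)ᶜ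
      _ = _ := by ring
  calc _ ≤ (((Finset.univ ×ˢ rsupp x).biUnion (fun p : Fin m × Fin n =>
          cancelEvent (q := 2 * k) (N := N) x p.1 p.2)).card : ℝ)
        + (((rsupp x)ᶜ.biUnion fun j =>
          missEvent (m := m) (q := 2 * k) (N := N) (rsupp x) j).card : ℝ) := by
        exact_mod_cast (Finset.card_le_card hsub).trans (Finset.card_union_le _ _)
    _ ≤ _ := by linarith

/-- The mass at `b` of the image under `g` of the uniform distribution on `Ω`. -/
def uniformImageMass {Ω β : Type*} [Fintype Ω] (g : Ω → β) (b : β) : ℝ :=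
  ((Finset.univ.filter fun ω => g ω = b).card : ℝ) / Fintype.card Ω

lemma uniformImageMass_eq_zero {Ω β : Type*} [Fintype Ω] (g : Ω → β) {b : β}
    (hb : b ∉ Set.range g) : uniformImageMass g b = 0 := by
  refine div_eq_zero_iff.2 (Or.inl (Nat.cast_eq_zero.2 (Finset.card_eq_zero.2 ?_)))
  rw [Finset.filter_eq_empty_iff]
  exact fun ω _ e => hb ⟨ω, e⟩

lemma sum_uniformImageMass {Ω β : Type*} [Fintype Ω] [DecidableEq β] (g : Ω → β) (P : β → Prop)
    [DecidablePred P] :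
    (∑ b ∈ Finset.univ.image g, if P b then uniformImageMass g b else 0)
      = ((Finset.univ.filter fun ω => P (g ω)).card : ℝ) / Fintype.card Ω := by
  have hmaps : ∀ ω ∈ Finset.univ.filter fun ω => P (g ω), g ω ∈ Finset.univ.image g :=
    fun ω _ => Finset.mem_image_of_mem g (Finset.mem_univ ω)
  rw [Finset.card_eq_sum_card_fiberwise hmaps, Nat.cast_sum, Finset.sum_div]
  refine Finset.sum_congr rfl fun b _ => ?_
  split_ifs with h
  · rw [uniformImageMass]
    have hfiber : (Finset.univ.filter fun ω => g ω = b)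
        = (Finset.univ.filter fun ω => P (g ω)).filter fun ω => g ω = b := by
      ext ω
      simp only [Finset.mem_filter, Finset.mem_univ, true_and]
      exact ⟨fun e => ⟨e ▸ h, e⟩, fun e => e.2⟩
    rw [← hfiber]
    congr
  · rw [Finset.filter_eq_empty_iff.2, Finset.card_empty, Nat.cast_zero, zero_div]
    intro ω hω e
    exact h (e ▸ (Finset.mem_filter.1 hω).2)

lemma mul_one_sub_pow_le {m n k : ℕ} (hk : 0 < k) (hkn : k ≤ n)
    (hm : 16 * k * Nat.clog 2 n ≤ m) :
    (n : ℝ) * (1 - 1 / (4 * k)) ^ m ≤ 1 / (k : ℝ) ^ 3 := by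
  have hk' : (1 : ℝ) ≤ k := by exact_mod_cast hk
  have hkn' : (k : ℝ) ≤ n := by exact_mod_cast hkn
  have hε : (1 : ℝ) / (4 * k) ≤ 1 := by
    rw [div_le_one (by positivity)]
    linarith
  have hn : (n : ℝ) ≤ 2 ^ Nat.clog 2 n := by exact_mod_cast Nat.le_pow_clog (by norm_num) n
  have hnpos : (0 : ℝ) < n := by linarith
  have hpow : (1 - 1 / (4 * k) : ℝ) ^ m ≤ 1 / (n : ℝ) ^ 4 := calc
    _ ≤ (1 - 1 / (4 * k) : ℝ) ^ (16 * k * Nat.clog 2 n) :=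
        pow_le_pow_of_le_one (by linarith) (by simp) hm
    _ ≤ Real.exp (-(1 / (4 * k))) ^ (16 * k * Nat.clog 2 n) := by
        exact pow_le_pow_left₀ (by linarith) (Real.one_sub_le_exp_neg _) _
    _ = (Real.exp (-1) ^ Nat.clog 2 n) ^ 4 := by
        rw [← Real.exp_nat_mul, ← Real.exp_nat_mul, ← Real.exp_nat_mul]
        congr 1
        push_cast
        field_simp
        ring
    _ ≤ ((1 / 2) ^ Nat.clog 2 n) ^ 4 := by
        gcongr
        rw [Real.exp_neg, ← one_div]
        apply one_div_le_one_div_of_le (by norm_num)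
        linarith [Real.add_one_le_exp 1]
    _ = 1 / (2 ^ Nat.clog 2 n) ^ 4 := by simp
    _ ≤ _ := by gcongr
  calc (n : ℝ) * (1 - 1 / (4 * k)) ^ m ≤ n * (1 / (n : ℝ) ^ 4) := by gcongr
    _ = 1 / (n : ℝ) ^ 3 := by field_simp
    _ ≤ _ := by gcongr

lemma one_le_ceil_log_div_log_log {α : ℝ} (hα : 0 < α) {k : ℕ} (hk : 0 < k) :
    1 ≤ ⌈α * Real.log (16 * k) / Real.log (Real.log (16 * k))⌉₊ := by
  have hk' : (1 : ℝ) ≤ k := by exact_mod_cast hk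
  have hlog : 1 < Real.log (16 * k) := by
    rw [Real.lt_log_iff_exp_lt (by positivity)]
    linarith [Real.exp_one_lt_d9]
  have hloglog := Real.log_pos hlog
  rw [Nat.one_le_ceil_iff]
  positivity

/-- EDOCS-EE guarantee: probabilistic (for-each) exact support recovery from one-bit
measurements.  Fix `α > 1` and `δ > 0`, and set
`k_α := ⌈α · log(16k) / log log(16k)⌉`.  For all sufficiently large `k` and all
`n ≥ k`, with `m := 16 · k_α · k · ⌈log₂ n⌉` measurements, there are a finitely
supported probability distribution `μ` over sensing matrices `A ∈ ℝ^{m×n}` and a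
decoding map `f` such that, for every fixed signal `x` with `1 ≤ |supp(x)| ≤ k`, the
probability over `A ∼ μ` that `f(A, nz(Ax)) ≠ supp(x)` is at most
`⌈log₂ n⌉ · (16k)^{1−α+δ} + e^{−k} + n^{−k} + 5k^{−3}`. -/
theorem edocs_EE_probabilistic_exact_support_recovery
    (α δ : ℝ) (hα : 1 < α) (hδ : 0 < δ) :
    ∃ k₀ : ℕ, ∀ k n : ℕ, k₀ ≤ k → k ≤ n →
      ∀ m : ℕ,
        m = 16 * ⌈α * Real.log (16 * k) / Real.log (Real.log (16 * k))⌉₊ * k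
              * Nat.clog 2 n →
        ∃ (s : Finset (Matrix (Fin m) (Fin n) ℝ))
          (μ : Matrix (Fin m) (Fin n) ℝ → ℝ)
          (f : Matrix (Fin m) (Fin n) ℝ → (Fin m → Bool) → Finset (Fin n)),
          (∀ B, 0 ≤ μ B) ∧ (∀ B ∉ s, μ B = 0) ∧ (∑ B ∈ s, μ B) = 1 ∧
          ∀ x : Fin n → ℝ, 1 ≤ (rsupp x).card → (rsupp x).card ≤ k →
            (∑ B ∈ s, if f B (nzVec (B.mulVec x)) ≠ rsupp x then μ B else 0)
              ≤ (Nat.clog 2 n : ℝ) * (16 * (k : ℝ)) ^ (1 - α + δ)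
                  + Real.exp (-(k : ℝ)) + (n : ℝ) ^ (-(k : ℝ)) + 5 / (k : ℝ) ^ 3 := by
  refine ⟨1, fun k n hk hkn m hm => ?_⟩
  have hm' : 16 * k * Nat.clog 2 n ≤ m := by
    have h1 := one_le_ceil_log_div_log_log (zero_lt_one.trans hα) hk
    rw [hm]
    gcongr
    omega
  set N := m * n * k ^ 3 + 1 with hN
  have : NeZero (2 * k) := ⟨by omega⟩
  have : NeZero N := ⟨by omega⟩
  let g : (Fin m → Fin n → Fin (2 * k) × Fin N) → Matrix (Fin m) (Fin n) ℝ := sampleMatrix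
  have hC : (0 : ℝ) < Fintype.card (Fin m → Fin n → Fin (2 * k) × Fin N) := by
    exact_mod_cast Fintype.card_pos
  refine ⟨Finset.univ.image g, uniformImageMass g, coverDecoder,
    fun B => by unfold uniformImageMass; positivity, fun B hB => uniformImageMass_eq_zero g (by simpa using hB), ?_,
    fun x _ hx => ?_⟩
  · have h := sum_uniformImageMass g fun _ => True
    simp only [if_true, Finset.filter_true, Finset.card_univ] at h
    rw [h, div_self hC.ne']
  · have hsum := sum_uniformImageMass g fun B => coverDecoder B (nzVec (B.mulVec x)) ≠ rsupp x
    have hfail := card_decoding_failure_le (m := m) (N := N) hk (by omega) x hx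
    rw [← div_le_iff₀ hC] at hfail
    have hk' : (0 : ℝ) < k := by exact_mod_cast hk
    have hNle : (m * n : ℝ) / N ≤ 1 / (k : ℝ) ^ 3 := by
      rw [div_le_div_iff₀ (by rw [hN]; positivity) (by positivity), hN]
      push_cast
      linarith
    have hmain : (∑ B ∈ Finset.univ.image g,
        if coverDecoder B (nzVec (B.mulVec x)) ≠ rsupp x then uniformImageMass g B else 0)
        ≤ 2 / (k : ℝ) ^ 3 := by
      rw [hsum]
      refine hfail.trans ?_
      have := mul_one_sub_pow_le hk hkn hm'
      calc _ ≤ 1 / (k : ℝ) ^ 3 + 1 / (k : ℝ) ^ 3 := add_le_add hNle this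
        _ = _ := by ring
    have h25 : 2 / (k : ℝ) ^ 3 ≤ 5 / (k : ℝ) ^ 3 := by gcongr; norm_num
    have hpos : 0 ≤ (Nat.clog 2 n : ℝ) * (16 * (k : ℝ)) ^ (1 - α + δ)
        + Real.exp (-(k : ℝ)) + (n : ℝ) ^ (-(k : ℝ)) := by positivity
    linarith

end
end
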